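/- arXiv:2306.04327 — 3 statements merged into one kernel-verified Lean document; each statement's English description precedes it below -/
import Mathlib

section
/- (Weyl's inequalities) Let $M$ and $P$ be real symmetric $n \times n$ matrices. List the eigenvalues of $M$, $P$, and $M+P$ in decreasing order as $\alpha_1 \ge \dots \ge \alpha_n$, $\delta_1 \ge \dots \ge \delta_n$, and $\gamma_1 \ge \dots \ge \gamma_n$ respectively. Then for all indices $i, j$ with $1 \le i, j \le n$: if $i + j - 1 \le n$ then $\gamma_{i+j-1} \le \alpha_i + \delta_j$, and if $i + j - n \ge 1$ then $\alpha_i + \delta_j \le \gamma_{i+j-n}$. -/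
open Matrix BigOperators

/-! Courant–Fischer: a subspace of dimension greater than `k` meets the span of the eigenvectors
with index at least `k`, and one of codimension at most `k` meets the span of the first `k + 1`
eigenvectors; comparing Rayleigh quotients at a common nonzero vector bounds the `k`-th eigenvalue.
Weyl's inequalities for `T + S` follow by testing on the intersection of an eigenvector span of
`T` with one of `S`, where the Rayleigh quotients add. -/

theorem eq_of_antitone_of_map_univ_eq {β : Type*} [PartialOrder β] {n : ℕ} {f g : Fin n → β}
    (hf : Antitone f) (hg : Antitone g)
    (h : Finset.univ.val.map f = Finset.univ.val.map g) : f = g := by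
  rw [Fin.univ_val_map, Fin.univ_val_map, Multiset.coe_eq_coe] at h
  exact List.ofFn_injective (h.eq_of_sortedGE hf.sortedGE_ofFn hg.sortedGE_ofFn)

theorem exists_mem_mem_ne_zero_of_finrank_lt_add {K V : Type*} [DivisionRing K] [AddCommGroup V]
    [Module K V] [FiniteDimensional K V] {U W : Submodule K V}
    (h : Module.finrank K V < Module.finrank K U + Module.finrank K W) :
    ∃ x ∈ U, x ∈ W ∧ x ≠ 0 := by
  by_contra! hUW
  exact h.not_ge (Submodule.finrank_add_finrank_le_of_disjoint (Submodule.disjoint_def.2 hUW))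

theorem finrank_add_finrank_le_finrank_add_finrank_inf {K V : Type*} [DivisionRing K]
    [AddCommGroup V] [Module K V] [FiniteDimensional K V] (U W : Submodule K V) :
    Module.finrank K U + Module.finrank K W ≤ Module.finrank K V + Module.finrank K ↥(U ⊓ W) := by
  rw [← Submodule.finrank_sup_add_finrank_inf_eq]
  gcongr
  exact Submodule.finrank_le _

section SymmetricOperators

variable {𝕜 E : Type*} [RCLike 𝕜] [NormedAddCommGroup E] [InnerProductSpace 𝕜 E]
  [FiniteDimensional 𝕜 E] {T S : E →ₗ[𝕜] E} {n : ℕ}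
  (hT : T.IsSymmetric) (hS : S.IsSymmetric) (hn : Module.finrank 𝕜 E = n)

theorem eq_eigenvalues_of_antitone {α : Fin n → ℝ} (hα : Antitone α)
    (hroots : T.charpoly.roots = Finset.univ.val.map fun k => (α k : 𝕜)) :
    α = hT.eigenvalues hn := by
  refine eq_of_antitone_of_map_univ_eq hα (hT.eigenvalues_antitone hn) ?_
  have h := hroots.symm.trans (hT.roots_charpoly_eq_eigenvalues hn)
  simpa [Function.comp_def] using congrArg (Multiset.map RCLike.re) h

theorem re_inner_apply_self_eq_sum_eigenvalues (x : E) :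
    RCLike.re (inner 𝕜 (T x) x) =
      ∑ k, hT.eigenvalues hn k * ‖inner 𝕜 (hT.eigenvectorBasis hn k) x‖ ^ 2 := by
  rw [← (hT.eigenvectorBasis hn).sum_inner_mul_inner, map_sum]
  refine Finset.sum_congr rfl fun k _ => ?_
  rw [hT, hT.apply_eigenvectorBasis, inner_smul_right, mul_assoc, RCLike.re_ofReal_mul,
    inner_mul_symm_re_eq_norm, norm_mul, norm_inner_symm x, sq]

/-- The span of the vectors of the sorted eigenbasis of `T` with index in `s`, on which the
Rayleigh quotient of `T` lies between the extreme eigenvalues with index in `s`. -/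
def eigenvectorSpan (s : Finset (Fin n)) : Submodule 𝕜 E :=
  Submodule.span 𝕜 (hT.eigenvectorBasis hn '' s)

theorem finrank_eigenvectorSpan (s : Finset (Fin n)) :
    Module.finrank 𝕜 (eigenvectorSpan hT hn s) = s.card := by
  classical
  have hli := (hT.eigenvectorBasis hn).orthonormal.linearIndependent
  rw [eigenvectorSpan, ← Finset.coe_image,
    finrank_span_finset_eq_card (hli.linearIndepOn_id.mono (by simp)),
    Finset.card_image_of_injective _ hli.injective]

theorem inner_eigenvectorBasis_eq_zero_of_mem_eigenvectorSpan {s : Finset (Fin n)} {x : E}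
    (hx : x ∈ eigenvectorSpan hT hn s) {k : Fin n} (hk : k ∉ s) :
    inner 𝕜 (hT.eigenvectorBasis hn k) x = 0 := by
  rw [eigenvectorSpan, ← OrthonormalBasis.coe_toBasis, Module.Basis.mem_span_image] at hx
  simpa [OrthonormalBasis.repr_apply_apply] using fun h => hk (@hx k h)

theorem re_inner_apply_self_le_of_mem_eigenvectorSpan {s : Finset (Fin n)} {c : ℝ}
    (hc : ∀ k ∈ s, hT.eigenvalues hn k ≤ c) {x : E} (hx : x ∈ eigenvectorSpan hT hn s) :
    RCLike.re (inner 𝕜 (T x) x) ≤ c * ‖x‖ ^ 2 := by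
  rw [re_inner_apply_self_eq_sum_eigenvalues hT hn,
    ← (hT.eigenvectorBasis hn).sum_sq_norm_inner_right, Finset.mul_sum]
  refine Finset.sum_le_sum fun k _ => ?_
  by_cases hk : k ∈ s
  · gcongr
    exact hc k hk
  · simp [inner_eigenvectorBasis_eq_zero_of_mem_eigenvectorSpan hT hn hx hk]

theorem le_re_inner_apply_self_of_mem_eigenvectorSpan {s : Finset (Fin n)} {c : ℝ}
    (hc : ∀ k ∈ s, c ≤ hT.eigenvalues hn k) {x : E} (hx : x ∈ eigenvectorSpan hT hn s) :
    c * ‖x‖ ^ 2 ≤ RCLike.re (inner 𝕜 (T x) x) := by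
  rw [re_inner_apply_self_eq_sum_eigenvalues hT hn,
    ← (hT.eigenvectorBasis hn).sum_sq_norm_inner_right, Finset.mul_sum]
  refine Finset.sum_le_sum fun k _ => ?_
  by_cases hk : k ∈ s
  · gcongr
    exact hc k hk
  · simp [inner_eigenvectorBasis_eq_zero_of_mem_eigenvectorSpan hT hn hx hk]

theorem re_inner_apply_self_le_of_mem_eigenvectorSpan_Ici {i : Fin n} {x : E}
    (hx : x ∈ eigenvectorSpan hT hn (Finset.Ici i)) :
    RCLike.re (inner 𝕜 (T x) x) ≤ hT.eigenvalues hn i * ‖x‖ ^ 2 :=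
  re_inner_apply_self_le_of_mem_eigenvectorSpan hT hn
    (fun _ hk => hT.eigenvalues_antitone hn (by simpa using hk)) hx

theorem le_re_inner_apply_self_of_mem_eigenvectorSpan_Iic {i : Fin n} {x : E}
    (hx : x ∈ eigenvectorSpan hT hn (Finset.Iic i)) :
    hT.eigenvalues hn i * ‖x‖ ^ 2 ≤ RCLike.re (inner 𝕜 (T x) x) :=
  le_re_inner_apply_self_of_mem_eigenvectorSpan hT hn
    (fun _ hk => hT.eigenvalues_antitone hn (by simpa using hk)) hx

theorem le_eigenvalues_of_lt_finrank {V : Submodule 𝕜 E} {c : ℝ} {k : Fin n}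
    (hV : k < Module.finrank 𝕜 V)
    (hc : ∀ x ∈ V, c * ‖x‖ ^ 2 ≤ RCLike.re (inner 𝕜 (T x) x)) : c ≤ hT.eigenvalues hn k := by
  obtain ⟨x, hxV, hx, hx0⟩ : ∃ x ∈ V, x ∈ eigenvectorSpan hT hn (Finset.Ici k) ∧ x ≠ 0 := by
    refine exists_mem_mem_ne_zero_of_finrank_lt_add ?_
    rw [finrank_eigenvectorSpan, Fin.card_Ici]
    omega
  have hle := (hc x hxV).trans (re_inner_apply_self_le_of_mem_eigenvectorSpan_Ici hT hn hx)
  exact le_of_mul_le_mul_right hle (by positivity)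

theorem eigenvalues_le_of_le_finrank_add {V : Submodule 𝕜 E} {c : ℝ} {k : Fin n}
    (hV : n ≤ Module.finrank 𝕜 V + k)
    (hc : ∀ x ∈ V, RCLike.re (inner 𝕜 (T x) x) ≤ c * ‖x‖ ^ 2) : hT.eigenvalues hn k ≤ c := by
  obtain ⟨x, hxV, hx, hx0⟩ : ∃ x ∈ V, x ∈ eigenvectorSpan hT hn (Finset.Iic k) ∧ x ≠ 0 := by
    refine exists_mem_mem_ne_zero_of_finrank_lt_add ?_
    rw [finrank_eigenvectorSpan, Fin.card_Iic]
    omega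
  have hle := (le_re_inner_apply_self_of_mem_eigenvectorSpan_Iic hT hn hx).trans (hc x hxV)
  exact le_of_mul_le_mul_right hle (by positivity)

theorem eigenvalues_add_le {i j k : Fin n} (hijk : (i + j : ℕ) ≤ k) :
    (hT.add hS).eigenvalues hn k ≤ hT.eigenvalues hn i + hS.eigenvalues hn j := by
  refine eigenvalues_le_of_le_finrank_add _ hn
    (V := eigenvectorSpan hT hn (Finset.Ici i) ⊓ eigenvectorSpan hS hn (Finset.Ici j)) ?_ ?_
  · have h := finrank_add_finrank_le_finrank_add_finrank_inf
      (eigenvectorSpan hT hn (Finset.Ici i)) (eigenvectorSpan hS hn (Finset.Ici j))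
    rw [finrank_eigenvectorSpan, finrank_eigenvectorSpan, Fin.card_Ici, Fin.card_Ici, hn] at h
    omega
  · rintro x ⟨hxT, hxS⟩
    rw [LinearMap.add_apply, inner_add_left, map_add, add_mul]
    exact add_le_add (re_inner_apply_self_le_of_mem_eigenvectorSpan_Ici hT hn hxT)
      (re_inner_apply_self_le_of_mem_eigenvectorSpan_Ici hS hn hxS)

theorem le_eigenvalues_add {i j k : Fin n} (hijk : (k + n : ℕ) ≤ i + j + 1) :
    hT.eigenvalues hn i + hS.eigenvalues hn j ≤ (hT.add hS).eigenvalues hn k := by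
  refine le_eigenvalues_of_lt_finrank _ hn
    (V := eigenvectorSpan hT hn (Finset.Iic i) ⊓ eigenvectorSpan hS hn (Finset.Iic j)) ?_ ?_
  · have h := finrank_add_finrank_le_finrank_add_finrank_inf
      (eigenvectorSpan hT hn (Finset.Iic i)) (eigenvectorSpan hS hn (Finset.Iic j))
    rw [finrank_eigenvectorSpan, finrank_eigenvectorSpan, Fin.card_Iic, Fin.card_Iic, hn] at h
    omega
  · rintro x ⟨hxT, hxS⟩
    rw [LinearMap.add_apply, inner_add_left, map_add, add_mul]
    exact add_le_add (le_re_inner_apply_self_of_mem_eigenvectorSpan_Iic hT hn hxT)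
      (le_re_inner_apply_self_of_mem_eigenvectorSpan_Iic hS hn hxS)

end SymmetricOperators

theorem charpoly_toEuclideanLin {𝕜 ι : Type*} [RCLike 𝕜] [Fintype ι] [DecidableEq ι]
    (A : Matrix ι ι 𝕜) : (toEuclideanLin A).charpoly = A.charpoly := by
  rw [toEuclideanLin_eq_toLin_orthonormal, charpoly_toLin]

theorem fiedler_stmt_2_general {𝕜 E : Type*} [RCLike 𝕜] [NormedAddCommGroup E]
    [InnerProductSpace 𝕜 E] [FiniteDimensional 𝕜 E] {T S : E →ₗ[𝕜] E} {n : ℕ}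
    (hT : T.IsSymmetric) (hS : S.IsSymmetric) (hn : Module.finrank 𝕜 E = n)
    {α δ γ : Fin n → ℝ} (hα : Antitone α) (hδ : Antitone δ) (hγ : Antitone γ)
    (hαr : T.charpoly.roots = Finset.univ.val.map fun k => (α k : 𝕜))
    (hδr : S.charpoly.roots = Finset.univ.val.map fun k => (δ k : 𝕜))
    (hγr : (T + S).charpoly.roots = Finset.univ.val.map fun k => (γ k : 𝕜)) (i j : Fin n) :
    (∀ h : i.val + j.val < n, γ ⟨i.val + j.val, h⟩ ≤ α i + δ j) ∧
      (n - 1 ≤ i.val + j.val → α i + δ j ≤ γ ⟨i.val + j.val + 1 - n, by omega⟩) := by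
  rw [eq_eigenvalues_of_antitone hT hn hα hαr, eq_eigenvalues_of_antitone hS hn hδ hδr,
    eq_eigenvalues_of_antitone (hT.add hS) hn hγ hγr]
  exact ⟨fun _ => eigenvalues_add_le hT hS hn le_rfl,
    fun h => le_eigenvalues_add hT hS hn (by simp only; omega)⟩

/-- **Weyl's inequalities.** Let `M`, `P` be real symmetric `n × n` matrices and
let `α`, `δ`, `γ` enumerate the eigenvalues (with multiplicity, i.e. the multiset of roots of
the characteristic polynomial) of `M`, `P`, `M + P` respectively, in decreasing order.
Then (0-based indexing) `γ (i+j) ≤ α i + δ j` whenever `i + j < n`, and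
`α i + δ j ≤ γ (i+j+1-n)` whenever `n - 1 ≤ i + j`. -/
theorem fiedler_stmt_2 (n : ℕ) (M P : Matrix (Fin n) (Fin n) ℝ)
    (hM : M.IsSymm) (hP : P.IsSymm)
    (α δ γ : Fin n → ℝ) (hα : Antitone α) (hδ : Antitone δ) (hγ : Antitone γ)
    (hαr : M.charpoly.roots = Finset.univ.val.map α)
    (hδr : P.charpoly.roots = Finset.univ.val.map δ)
    (hγr : (M + P).charpoly.roots = Finset.univ.val.map γ) :
    ∀ i j : Fin n,
      (∀ h : i.val + j.val < n, γ ⟨i.val + j.val, h⟩ ≤ α i + δ j) ∧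
      (n - 1 ≤ i.val + j.val →
        α i + δ j ≤ γ ⟨i.val + j.val + 1 - n, by
          have hi := i.isLt; have hj := j.isLt; omega⟩) := by
  rw [← isHermitian_iff_isSymm, ← isSymmetric_toEuclideanLin_iff] at hM hP
  rw [← charpoly_toEuclideanLin] at hαr hδr
  rw [← charpoly_toEuclideanLin, map_add] at hγr
  exact fiedler_stmt_2_general hM hP finrank_euclideanSpace_fin hα hδ hγ hαr hδr hγr
end

section
/- Let $G$ be a connected finite undirected graph on vertices $\{1, \dots, n\}$ with adjacency matrix $A$, let $v \in \{1,\dots,n\}$, and for $x > 0$ let $\tilde{L}(x)$ be the perturbed Laplacian obtained by attaching pendant vertex $n+1$ to $v$ with edge weight $x$. Then for every $\varepsilon > 0$ there exists $\delta > 0$ such that for every $x \in (0, \delta)$, every unit eigenvector $\Phi$ of $\tilde{L}(x)$ for its second smallest eigenvalue, and every edge $(i,j)$ of $G$ (i.e., $A_{ij} = 1$ with $i, j \le n$), one has $|\Phi(i) - \Phi(j)| < \varepsilon$. -/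
open Matrix BigOperators

/-- The Laplacian of the graph obtained from a graph `G` on `Fin n` by attaching a new pendant
vertex (the vertex `Fin.last n` of `Fin (n+1)`) to the vertex `v` by an edge of weight `x`:
`L̃(x) = [[L, 0], [0, 0]] + x (e_v - e_{n+1})(e_v - e_{n+1})ᵀ`. -/
noncomputable def pertLap (n : ℕ) (G : SimpleGraph (Fin n)) [DecidableRel G.Adj] (v : Fin n)
    (x : ℝ) : Matrix (Fin (n+1)) (Fin (n+1)) ℝ :=
  Matrix.reindex finSumFinEquiv finSumFinEquiv
      (Matrix.fromBlocks (G.lapMatrix ℝ) 0 0 0) +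
    x • Matrix.vecMulVec
      (fun i => if i = Fin.castSucc v then 1 else if i = Fin.last n then -1 else 0)
      (fun i => if i = Fin.castSucc v then 1 else if i = Fin.last n then -1 else 0)

/-!
The quadratic form of `L̃(x)` dominates `(Φ i - Φ j) ^ 2` for every edge of `G`, and at a unit
eigenvector it equals the eigenvalue. On the plane of vectors constant on `G` only the pendant edge
contributes to it, so by Courant–Fischer the second smallest eigenvalue is at most
`(1 + 1 / n) * x`.
-/

section CourantFischer

open scoped Finset

variable {𝕜 : Type*} [RCLike 𝕜]

section Operator

variable {ι E : Type*} [Fintype ι] [NormedAddCommGroup E] [InnerProductSpace 𝕜 E]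
  {T : E →ₗ[𝕜] E} {ν : ι → ℝ}

lemma re_inner_apply_self_eq_sum (b : OrthonormalBasis ι 𝕜 E)
    (hb : ∀ i, T (b i) = (ν i : 𝕜) • b i) (w : E) :
    RCLike.re (inner 𝕜 w (T w)) = ∑ i, ν i * ‖inner 𝕜 (b i) w‖ ^ 2 := by
  have hTw : T w = ∑ i, inner 𝕜 (b i) w • (ν i : 𝕜) • b i := by
    conv_lhs => rw [← b.sum_repr' w]
    simp only [map_sum, map_smul, hb]
  rw [hTw, inner_sum, map_sum]
  refine Finset.sum_congr rfl fun i _ => ?_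
  rw [inner_smul_right, inner_smul_right, mul_left_comm, RCLike.re_ofReal_mul,
    inner_mul_symm_re_eq_norm, norm_mul, norm_inner_symm w, sq]

lemma finrank_le_card_eigenvalues_le (b : OrthonormalBasis ι 𝕜 E)
    (hb : ∀ i, T (b i) = (ν i : 𝕜) • b i) {W : Submodule 𝕜 E} {c : ℝ}
    (hW : ∀ w ∈ W, RCLike.re (inner 𝕜 w (T w)) ≤ c * ‖w‖ ^ 2) :
    Module.finrank 𝕜 W ≤ #{i | ν i ≤ c} := by
  let coords : W →ₗ[𝕜] ({i // ν i ≤ c} → 𝕜) :=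
    LinearMap.pi fun i => (innerₛₗ 𝕜 (b i)).comp W.subtype
  suffices hinj : Function.Injective coords by
    simpa [Fintype.card_subtype] using LinearMap.finrank_le_finrank_of_injective hinj
  refine (injective_iff_map_eq_zero coords).2 fun ⟨w, hw⟩ hzero => Subtype.ext ?_
  have hlow (i : ι) (hi : ν i ≤ c) : inner 𝕜 (b i) w = 0 := congrFun hzero ⟨i, hi⟩
  have hterm (i : ι) : 0 ≤ (ν i - c) * ‖inner 𝕜 (b i) w‖ ^ 2 := by
    rcases le_or_gt (ν i) c with hi | hi
    · simp [hlow i hi]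
    · exact mul_nonneg (sub_nonneg.2 hi.le) (sq_nonneg _)
  have hsum : ∑ i, (ν i - c) * ‖inner 𝕜 (b i) w‖ ^ 2 = 0 := by
    refine le_antisymm ?_ (Finset.sum_nonneg fun i _ => hterm i)
    simp only [sub_mul, Finset.sum_sub_distrib, ← Finset.mul_sum, b.sum_sq_norm_inner_right,
      ← re_inner_apply_self_eq_sum b hb]
    exact sub_nonpos.2 (hW w hw)
  refine b.toBasis.ext_elem fun i => ?_
  have hi := (Finset.sum_eq_zero_iff_of_nonneg fun i _ => hterm i).1 hsum i (Finset.mem_univ i)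
  have hcoord : inner 𝕜 (b i) w = 0 := by
    rcases le_or_gt (ν i) c with hle | hgt
    · exact hlow i hle
    · simpa [(sub_pos.2 hgt).ne'] using hi
  simpa [b.repr_apply_apply] using hcoord

end Operator

lemma apply_le_of_lt_card_le {α : Type*} [LinearOrder α] {m : ℕ} {μ : Fin m → α}
    (hμ : Monotone μ) {c : α} {k : Fin m} (hk : (k : ℕ) < #{i | μ i ≤ c}) : μ k ≤ c := by
  by_contra! hc
  have hsub : ({i | μ i ≤ c} : Finset (Fin m)) ⊆ Finset.Iio k := fun i hi =>
    Finset.mem_Iio.2 (hμ.reflect_lt ((Finset.mem_filter.1 hi).2.trans_lt hc))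
  exact hk.not_ge ((Finset.card_le_card hsub).trans_eq (Fin.card_Iio k))

section Hermitian

variable {ι : Type*} [Fintype ι] [DecidableEq ι] {A : Matrix ι ι 𝕜}

lemma finrank_le_card_isHermitian_eigenvalues_le (hA : A.IsHermitian) {W : Submodule 𝕜 (ι → 𝕜)}
    {c : ℝ} (hW : ∀ w ∈ W, RCLike.re (star w ⬝ᵥ (A *ᵥ w)) ≤ c * RCLike.re (star w ⬝ᵥ w)) :
    Module.finrank 𝕜 W ≤ #{i | hA.eigenvalues i ≤ c} := by
  let e : (ι → 𝕜) ≃ₗ[𝕜] EuclideanSpace 𝕜 ι := (WithLp.linearEquiv 2 𝕜 (ι → 𝕜)).symm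
  have heig (i : ι) : A.toLpLin 2 2 (hA.eigenvectorBasis i) =
      (hA.eigenvalues i : 𝕜) • hA.eigenvectorBasis i := by
    rw [toLpLin_apply, hA.mulVec_eigenvectorBasis, WithLp.toLp_smul, WithLp.toLp_ofLp,
      RCLike.real_smul_eq_coe_smul (K := 𝕜)]
  rw [← LinearEquiv.finrank_map_eq e W]
  refine finrank_le_card_eigenvalues_le hA.eigenvectorBasis heig ?_
  rintro _ ⟨w, hw, rfl⟩
  rw [← inner_self_eq_norm_sq (𝕜 := 𝕜), EuclideanSpace.inner_eq_star_dotProduct,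
    EuclideanSpace.inner_eq_star_dotProduct, dotProduct_comm, dotProduct_comm _ (star _)]
  exact hW w hw

lemma eigenvalue_le_of_lt_finrank (hA : A.IsHermitian) {m : ℕ} {μ : Fin m → ℝ} (hμ : Monotone μ)
    (hroots : A.charpoly.roots = Finset.univ.val.map fun i => (μ i : 𝕜))
    {W : Submodule 𝕜 (ι → 𝕜)} {c : ℝ}
    (hW : ∀ w ∈ W, RCLike.re (star w ⬝ᵥ (A *ᵥ w)) ≤ c * RCLike.re (star w ⬝ᵥ w))
    {k : Fin m} (hk : (k : ℕ) < Module.finrank 𝕜 W) : μ k ≤ c := by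
  have hvals : Finset.univ.val.map hA.eigenvalues = Finset.univ.val.map μ := by
    have h := congrArg (Multiset.map RCLike.re) (hA.roots_charpoly_eq_eigenvalues.symm.trans hroots)
    simpa [Function.comp_def] using h
  have hcard : #{i | hA.eigenvalues i ≤ c} = #{i | μ i ≤ c} := by
    simpa only [Finset.card_def, Finset.filter_val, Multiset.countP_map]
      using congrArg (Multiset.countP (· ≤ c)) hvals
  refine apply_le_of_lt_card_le hμ (hk.trans_le ?_)
  exact hcard ▸ finrank_le_card_isHermitian_eigenvalues_le hA hW

end Hermitian

end CourantFischer

lemma sq_sub_le_dotProduct_lapMatrix_mulVec {V R : Type*} [Fintype V] [DecidableEq V]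
    [Field R] [LinearOrder R] [IsStrictOrderedRing R] (G : SimpleGraph V) [DecidableRel G.Adj]
    (w : V → R) {i j : V} (hij : G.Adj i j) :
    (w i - w j) ^ 2 ≤ w ⬝ᵥ (G.lapMatrix R *ᵥ w) := by
  let f : V × V → R := fun p => if G.Adj p.1 p.2 then (w p.1 - w p.2) ^ 2 else 0
  have hf (p : V × V) : 0 ≤ f p := ite_nonneg (sq_nonneg _) le_rfl
  have hne : (i, j) ≠ (j, i) := fun h => hij.ne (congrArg Prod.fst h)
  have hpair : f (i, j) + f (j, i) ≤ ∑ p, f p :=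
    Finset.add_le_sum (fun p _ => hf p) (Finset.mem_univ _) (Finset.mem_univ _) hne
  rw [← toLinearMap₂'_apply', G.lapMatrix_toLinearMap₂' R, le_div_iff₀ two_pos, mul_two]
  simpa only [f, hij, hij.symm, if_true, sub_sq_comm (w j), Fintype.sum_prod_type] using hpair

section PerturbedLaplacian

variable {n : ℕ} (G : SimpleGraph (Fin n)) [DecidableRel G.Adj] (v : Fin n)

lemma isHermitian_pertLap (x : ℝ) : (pertLap n G v x).IsHermitian := by
  rw [IsHermitian, conjTranspose_eq_transpose_of_trivial, pertLap, transpose_add,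
    transpose_smul, transpose_vecMulVec, transpose_reindex, fromBlocks_transpose,
    (G.isSymm_lapMatrix ℝ).eq]
  simp

lemma dotProduct_pertLap_mulVec (x : ℝ) (w : Fin (n + 1) → ℝ) :
    w ⬝ᵥ (pertLap n G v x *ᵥ w) = Fin.init w ⬝ᵥ (G.lapMatrix ℝ *ᵥ Fin.init w) +
      x * (w v.castSucc - w (Fin.last n)) ^ 2 := by
  have hpendant : w ⬝ᵥ (fun i => if i = v.castSucc then 1 else if i = Fin.last n then -1 else 0) =
      w v.castSucc - w (Fin.last n) := by
    simp [dotProduct, Fin.sum_univ_castSucc, (Fin.castSucc_lt_last _).ne,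
      (Fin.castSucc_lt_last _).ne', sub_eq_add_neg]
  rw [pertLap, add_mulVec, dotProduct_add]
  congr 1
  · simp [dotProduct, mulVec, Fin.sum_univ_castSucc, Fin.init]
  · rw [smul_mulVec, vecMulVec_mulVec, dotProduct_smul, dotProduct_smul, dotProduct_comm _ w,
      hpendant, op_smul_eq_smul, smul_eq_mul, smul_eq_mul, sq]

lemma dotProduct_pertLap_mulVec_le_of_init_eq_const {x : ℝ} (hx : 0 ≤ x) {w : Fin (n + 1) → ℝ}
    {s : ℝ} (hw : Fin.init w = fun _ => s) :
    w ⬝ᵥ (pertLap n G v x *ᵥ w) ≤ (1 + 1 / n) * x * (w ⬝ᵥ w) := by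
  have hn : (0 : ℝ) < n := Nat.cast_pos.2 v.pos
  have hconst (i : Fin n) : w i.castSucc = s := congrFun hw i
  have hlap : G.lapMatrix ℝ *ᵥ Fin.init w = 0 :=
    G.lapMatrix_mulVec_eq_zero_iff_forall_adj.2 fun i j _ => by rw [hw]
  have hnorm : w ⬝ᵥ w = n * s ^ 2 + w (Fin.last n) ^ 2 := by
    simp [dotProduct, Fin.sum_univ_castSucc, hconst, sq]
  rw [dotProduct_pertLap_mulVec, hlap, dotProduct_zero, zero_add, hconst, hnorm]
  generalize w (Fin.last n) = t
  have hsq : (1 + 1 / n) * (n * s ^ 2 + t ^ 2) - (s - t) ^ 2 = (n * s + t) ^ 2 / n := by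
    field_simp
    ring
  calc x * (s - t) ^ 2 ≤ x * ((1 + 1 / n) * (n * s ^ 2 + t ^ 2)) :=
        mul_le_mul_of_nonneg_left (sub_nonneg.1 (hsq ▸ by positivity)) hx
    _ = (1 + 1 / n) * x * (n * s ^ 2 + t ^ 2) := by ring

lemma second_eigenvalue_pertLap_le {x : ℝ} (hx : 0 ≤ x) {μ : Fin (n + 1) → ℝ} (hμ : Monotone μ)
    (hroots : (pertLap n G v x).charpoly.roots = Finset.univ.val.map μ) :
    μ 1 ≤ (1 + 1 / n) * x := by
  let a : Fin (n + 1) → ℝ := Fin.snoc (fun _ => 1) 0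
  let b : Fin (n + 1) → ℝ := Fin.snoc (fun _ => 0) 1
  have hinit (s t : ℝ) : Fin.init (s • a + t • b) = fun _ => s := by
    ext i
    simp [a, b, Fin.init]
  have hlast (s t : ℝ) : (s • a + t • b) (Fin.last n) = t := by
    simp [a, b]
  have hindep : LinearIndependent ℝ ![a, b] := by
    refine LinearIndependent.pair_iff.2 fun s t h => ⟨?_, ?_⟩
    · rw [← congrFun (hinit s t) v, Fin.init, h, Pi.zero_apply]
    · rw [← hlast s t, h, Pi.zero_apply]
  refine eigenvalue_le_of_lt_finrank (isHermitian_pertLap G v x) hμ hroots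
    (W := Submodule.span ℝ (Set.range ![a, b])) (fun w hw => ?_) ?_
  · rw [Matrix.range_cons, Matrix.range_cons_empty] at hw
    obtain ⟨s, t, rfl⟩ := Submodule.mem_span_pair.1 hw
    exact dotProduct_pertLap_mulVec_le_of_init_eq_const G v hx (hinit s t)
  · rw [finrank_span_eq_card hindep, Fintype.card_fin]
    -- The value of `(1 : Fin (n + 1))` is `1 % (n + 1)`.
    exact Nat.lt_succ_of_le (Nat.mod_le 1 (n + 1))

theorem fiedler_stmt_7_general {x : ℝ} (hx : 0 ≤ x) {μ : Fin (n + 1) → ℝ} (hμ : Monotone μ)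
    (hroots : (pertLap n G v x).charpoly.roots = Finset.univ.val.map μ)
    {Φ : Fin (n + 1) → ℝ} (hΦ : ∑ i, Φ i ^ 2 = 1) (heig : pertLap n G v x *ᵥ Φ = μ 1 • Φ)
    {i j : Fin n} (hij : G.Adj i j) :
    (Φ i.castSucc - Φ j.castSucc) ^ 2 ≤ (1 + 1 / n) * x := by
  have hnorm : Φ ⬝ᵥ Φ = 1 := by simpa only [dotProduct, ← sq] using hΦ
  calc (Φ i.castSucc - Φ j.castSucc) ^ 2
      ≤ Fin.init Φ ⬝ᵥ (G.lapMatrix ℝ *ᵥ Fin.init Φ) :=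
        sq_sub_le_dotProduct_lapMatrix_mulVec G (Fin.init Φ) hij
    _ ≤ Φ ⬝ᵥ (pertLap n G v x *ᵥ Φ) := by
        rw [dotProduct_pertLap_mulVec]
        exact le_add_of_nonneg_right (by positivity)
    _ = μ 1 := by rw [heig, dotProduct_smul, hnorm, smul_eq_mul, mul_one]
    _ ≤ (1 + 1 / n) * x := second_eigenvalue_pertLap_le G v hx hμ hroots

end PerturbedLaplacian

/-- For a connected graph `G` and the perturbed Laplacian `L̃(x)`: for every
`ε > 0` there is `δ > 0` such that for every `x ∈ (0, δ)`, every unit eigenvector `Φ` of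
`L̃(x)` for its second smallest eigenvalue `μ 1` (eigenvalues with multiplicity enumerated in
increasing order by `μ`) and every edge `(i, j)` of `G`, one has `|Φ i - Φ j| < ε`. -/
theorem fiedler_stmt_7 (n : ℕ) (G : SimpleGraph (Fin n)) [DecidableRel G.Adj]
    (hG : G.Connected) (v : Fin n) :
    ∀ ε > (0 : ℝ), ∃ δ > (0 : ℝ), ∀ x : ℝ, 0 < x → x < δ →
      ∀ μ : Fin (n+1) → ℝ, Monotone μ →
        (pertLap n G v x).charpoly.roots = Finset.univ.val.map μ →
        ∀ Φ : Fin (n+1) → ℝ, ∑ i, Φ i ^ 2 = 1 →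
          pertLap n G v x *ᵥ Φ = μ 1 • Φ →
          ∀ i j : Fin n, G.Adj i j →
            |Φ (Fin.castSucc i) - Φ (Fin.castSucc j)| < ε := fun ε hε =>
  ⟨ε ^ 2 / (1 + 1 / n), by positivity, fun _ hx hxδ _ hμ hroots _ hΦ heig _ _ hij =>
    abs_lt_of_sq_lt_sq ((fiedler_stmt_7_general G v hx.le hμ hroots hΦ heig hij).trans_lt
      ((lt_div_iff₀' (by positivity)).1 hxδ)) hε.le⟩
end

section
/- Let $n \ge 2$, let $K_n$ be the complete graph on vertices $\{1, \dots, n\}$, and for $x > 0$ let $\tilde{L}(x)$ be the $(n+1) \times (n+1)$ perturbed Laplacian obtained by attaching pendant vertex $n+1$ to vertex $n$ with edge weight $x$. Let $a \in \mathbb{R}$, set $b = n - 1 - a$, and let $\Phi \in \mathbb{R}^{n+1}$ be the vector with $\Phi(i) = -1$ for $1 \le i \le n-1$, $\Phi(n) = a$, and $\Phi(n+1) = b$. Then $\Phi$ is an eigenvector of $\tilde{L}(x)$ with eigenvalue $a + 1$ if and only if $a^2 - a(2x + n - 2) + (n-1)(x-1) = 0$. -/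
open Matrix BigOperators

/-!
On the vertices of the graph, `Φ` is `(a + 1) e_v - 1`, where `v` carries the pendant vertex. If `v`
is adjacent to all other vertices, then `L e_v = n e_v - 1`, so both `L̃ Φ` and `(a + 1) Φ` equal
`-(a + 1)` on the vertices other than `v`, and the eigenvalue equation needs checking only at `v`
and at the pendant vertex. The choice `b = n - (a + 1)` makes these two equations equivalent.
-/

theorem lapMatrix_mulVec_single_of_isUniversal {V R : Type*} [Fintype V] [DecidableEq V]
    [NonAssocRing R] {G : SimpleGraph V} [DecidableRel G.Adj] {v : V} (hv : G.IsUniversal v)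
    (c : R) :
    G.lapMatrix R *ᵥ Pi.single v c = Pi.single v (Fintype.card V * c) - Function.const V c := by
  ext i
  rw [SimpleGraph.lapMatrix_mulVec_apply]
  rcases eq_or_ne i v with rfl | hi
  · have hdeg : G.degree i = Fintype.card V - 1 := (G.degree_eq_card_sub_one i).mpr hv
    have hcard : 1 ≤ Fintype.card V := Fintype.card_pos_iff.mpr ⟨i⟩
    simp [hdeg, hcard, sub_mul, Pi.single_apply]
  · simp [hi, (hv hi.symm).symm, Pi.single_apply]

theorem reindex_fromBlocks_zero_mulVec_snoc {R : Type*} [NonUnitalNonAssocSemiring R] {m n : ℕ}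
    (A : Matrix (Fin m) (Fin n) R) (f : Fin n → R) (t : R) :
    Matrix.reindex finSumFinEquiv finSumFinEquiv
        (Matrix.fromBlocks A 0 0 (0 : Matrix (Fin 1) (Fin 1) R)) *ᵥ
      (Fin.snoc f t : Fin (n + 1) → R) = (Fin.snoc (A *ᵥ f) 0 : Fin (m + 1) → R) := by
  have hinl : (Fin.snoc f t : Fin (n + 1) → R) ∘ finSumFinEquiv ∘ Sum.inl = f := by
    ext i
    exact Fin.snoc_castSucc (α := fun _ => R) t f i
  rw [reindex_apply, submatrix_mulVec_equiv, Equiv.symm_symm, fromBlocks_mulVec]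
  ext i
  induction i using Fin.lastCases <;> simp [Function.comp_assoc, hinl]

section

variable {n : ℕ} {G : SimpleGraph (Fin n)} [DecidableRel G.Adj] {v : Fin n}

theorem pertLap_mulVec_snoc (x : ℝ) (f : Fin n → ℝ) (t : ℝ) :
    pertLap n G v x *ᵥ (Fin.snoc f t : Fin (n + 1) → ℝ) =
      (Fin.snoc (G.lapMatrix ℝ *ᵥ f + Pi.single v (x * (f v - t))) (x * (t - f v)) :
        Fin (n + 1) → ℝ) := by
  rw [pertLap, add_mulVec, smul_mulVec, vecMulVec_mulVec, reindex_fromBlocks_zero_mulVec_snoc]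
  have hne (i : Fin n) : Fin.last n ≠ i.castSucc := (Fin.castSucc_ne_last i).symm
  ext i
  induction i using Fin.lastCases with
  | last => simp [dotProduct, Fin.sum_univ_castSucc, hne, ← sub_eq_add_neg]
  | cast i => simp [dotProduct, Fin.sum_univ_castSucc, hne, ← sub_eq_add_neg, Pi.single_apply]

theorem pertLap_mulVec_snoc_of_isUniversal (hv : G.IsUniversal v) (x c t : ℝ) :
    pertLap n G v x *ᵥ (Fin.snoc (Pi.single v c - 1) t : Fin (n + 1) → ℝ) =
      (Fin.snoc (Pi.single v (n * c + x * (c - 1 - t)) - Function.const (Fin n) c)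
        (x * (t - (c - 1))) : Fin (n + 1) → ℝ) := by
  have hlap : G.lapMatrix ℝ *ᵥ (Pi.single v c - 1) =
      Pi.single v (n * c) - Function.const (Fin n) c := by
    rw [mulVec_sub, lapMatrix_mulVec_single_of_isUniversal hv, Fintype.card_fin]
    exact sub_eq_self.mpr G.lapMatrix_mulVec_const_eq_zero
  rw [pertLap_mulVec_snoc, hlap, sub_add_eq_add_sub, ← Pi.single_add, Pi.sub_apply,
    Pi.single_eq_same, Pi.one_apply]

theorem pertLap_mulVec_snoc_eq_smul_iff_of_isUniversal (hv : G.IsUniversal v) (x c t : ℝ) :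
    pertLap n G v x *ᵥ (Fin.snoc (Pi.single v c - 1) t : Fin (n + 1) → ℝ) =
        c • (Fin.snoc (Pi.single v c - 1) t : Fin (n + 1) → ℝ) ↔
      n * c + x * (c - 1 - t) = c * c ∧ x * (t - (c - 1)) = c * t := by
  have hsmul : c • (Fin.snoc (Pi.single v c - 1) t : Fin (n + 1) → ℝ) =
      (Fin.snoc (Pi.single v (c * c) - Function.const (Fin n) c) (c * t) : Fin (n + 1) → ℝ) := by
    ext i
    induction i using Fin.lastCases <;> simp [Pi.single_apply, mul_sub]
  rw [pertLap_mulVec_snoc_of_isUniversal hv, hsmul, Fin.snoc_inj, sub_left_inj, Pi.single_inj]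

end

theorem fiedler_stmt_10_general (n : ℕ) (hn : 2 ≤ n) (G : SimpleGraph (Fin n))
    [DecidableRel G.Adj] (v : Fin n) (hv : G.IsUniversal v) (x a : ℝ) :
    let b : ℝ := (n : ℝ) - 1 - a
    let Φ : Fin (n + 1) → ℝ := fun i =>
      if i = Fin.last n then b else if i = v.castSucc then a else -1
    (Φ ≠ 0 ∧ pertLap n G v x *ᵥ Φ = (a + 1) • Φ) ↔
      a ^ 2 - a * (2 * x + (n : ℝ) - 2) + ((n : ℝ) - 1) * (x - 1) = 0 := by
  intro b Φ
  have hΦ : Φ = Fin.snoc (Pi.single v (a + 1) - 1) b := by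
    ext i
    induction i using Fin.lastCases with
    | last => simp [Φ]
    | cast i => by_cases hi : i = v <;> simp [Φ, hi]
  have hΦ_ne : Φ ≠ 0 := by
    have : Nontrivial (Fin n) := Fin.nontrivial_iff_two_le.mpr hn
    obtain ⟨w, hw⟩ := exists_ne v
    exact Function.ne_iff.mpr ⟨w.castSucc, by simp [Φ, hw]⟩
  rw [and_iff_right hΦ_ne, hΦ, pertLap_mulVec_snoc_eq_smul_iff_of_isUniversal hv]
  exact ⟨fun ⟨_, hlast⟩ => by linear_combination hlast,
    fun h => ⟨by linear_combination -h, by linear_combination h⟩⟩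

/-- For the complete graph `Kₙ` (`n ≥ 2`) with a pendant vertex attached to
the vertex of index `n-1` (vertex `n` in 1-based labelling) with edge weight `x > 0`, the vector
`Φ = (-1, …, -1, a, b)` with `b = n - 1 - a` is an eigenvector of the perturbed Laplacian
`L̃(x)` with eigenvalue `a + 1` if and only if `a² - a(2x + n - 2) + (n-1)(x-1) = 0`. -/
theorem fiedler_stmt_10 (n : ℕ) (hn : 2 ≤ n) (x : ℝ) (hx : 0 < x) (a : ℝ) :
    let b : ℝ := (n : ℝ) - 1 - a
    let Φ : Fin (n+1) → ℝ := fun i =>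
      if i = Fin.last n then b else if (i : ℕ) = n - 1 then a else -1
    (Φ ≠ 0 ∧ pertLap n ⊤ ⟨n - 1, by omega⟩ x *ᵥ Φ = (a + 1) • Φ) ↔
      a ^ 2 - a * (2 * x + (n : ℝ) - 2) + ((n : ℝ) - 1) * (x - 1) = 0 := by
  simpa only [Fin.ext_iff, Fin.val_castSucc] using
    fiedler_stmt_10_general n hn ⊤ ⟨n - 1, by omega⟩ .top x a
end
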